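/- Let X be an n×p real matrix, α ∈ (0,1], and w ∈ [α,1]^p, and let X^w be the matrix with columns X^w_k = w_k X_k. Then for every integer m with 1 ≤ m ≤ p, the sparse eigenvalues of X^w satisfy φ^w_max(m) ≤ φ_max(m) and φ^w_min(m) ≥ α φ_min(m), where φ_min, φ_max are the sparse eigenvalues of X. -/

import Mathlib

open Finset

/-- The Euclidean norm of a vector in `ℝ^k`. -/
noncomputable def euclNorm {k : ℕ} (v : Fin k → ℝ) : ℝ :=
  Real.sqrt (∑ i, v i ^ 2)

/-- The number of nonzero entries of a vector. -/
noncomputable def l0norm {p : ℕ} (v : Fin p → ℝ) : ℕ :=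
  (Finset.univ.filter fun k => v k ≠ 0).card

/-- Minimal sparse eigenvalue `φ_min(m)` of an `n × p` matrix `X`. -/
noncomputable def phiMin {n p : ℕ} (X : Matrix (Fin n) (Fin p) ℝ) (m : ℕ) : ℝ :=
  sInf {r : ℝ | ∃ v : Fin p → ℝ, v ≠ 0 ∧ l0norm v ≤ m ∧ r = euclNorm (X.mulVec v) / euclNorm v}

/-- Maximal sparse eigenvalue `φ_max(m)` of an `n × p` matrix `X`. -/
noncomputable def phiMax {n p : ℕ} (X : Matrix (Fin n) (Fin p) ℝ) (m : ℕ) : ℝ :=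
  sSup {r : ℝ | ∃ v : Fin p → ℝ, v ≠ 0 ∧ l0norm v ≤ m ∧ r = euclNorm (X.mulVec v) / euclNorm v}

/-!
With `w * v` the entrywise product, `(X * diagonal w) v = X (w * v)`. The vector `w * v` is at
least as sparse as `v`, and its norm lies between `min |w k| * ‖v‖` and `max |w k| * ‖v‖`. So the
estimate `φ_min(m) ‖u‖ ≤ ‖X u‖ ≤ φ_max(m) ‖u‖`, valid for every `m`-sparse `u` including `u = 0`,
can be applied to `u = w * v`.
-/

open Matrix
open scoped Matrix.Norms.L2Operator

section DiagonalScaling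

variable {ι κ R : Type*} [Fintype κ] [DecidableEq κ]

lemma diagonal_mulVec_eq_mul [NonUnitalNonAssocSemiring R] (w v : κ → R) :
    diagonal w *ᵥ v = w * v :=
  funext (mulVec_diagonal w v)

lemma mul_diagonal_mulVec [NonUnitalSemiring R] (X : Matrix ι κ R) (w v : κ → R) :
    (X * diagonal w) *ᵥ v = X *ᵥ (w * v) := by
  rw [← mulVec_mulVec, diagonal_mulVec_eq_mul]

end DiagonalScaling

section Norms

variable {k : ℕ} {v w : Fin k → ℝ}

lemma euclNorm_eq_norm_toLp (v : Fin k → ℝ) : euclNorm v = ‖WithLp.toLp 2 v‖ := by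
  simp [euclNorm, EuclideanSpace.norm_eq]

lemma euclNorm_nonneg (v : Fin k → ℝ) : 0 ≤ euclNorm v :=
  Real.sqrt_nonneg _

lemma euclNorm_zero : euclNorm (0 : Fin k → ℝ) = 0 := by
  simp [euclNorm]

lemma euclNorm_pos (hv : v ≠ 0) : 0 < euclNorm v := by
  simpa [euclNorm_eq_norm_toLp] using hv

lemma euclNorm_mulVec_le {n : ℕ} (X : Matrix (Fin n) (Fin k) ℝ) (v : Fin k → ℝ) :
    euclNorm (X *ᵥ v) ≤ ‖X‖ * euclNorm v := by
  simp only [euclNorm_eq_norm_toLp]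
  exact X.l2_opNorm_mulVec (WithLp.toLp 2 v)

lemma euclNorm_mul_le (w v : Fin k → ℝ) : euclNorm (w * v) ≤ ‖w‖ * euclNorm v := by
  simpa only [diagonal_mulVec_eq_mul, l2_opNorm_diagonal] using euclNorm_mulVec_le (diagonal w) v

lemma mul_euclNorm_le_euclNorm_mul {α : ℝ} (hw : ∀ i, α ≤ |w i|) (v : Fin k → ℝ) :
    α * euclNorm v ≤ euclNorm (w * v) := by
  rcases le_total α 0 with hα | hα
  · exact (mul_nonpos_of_nonpos_of_nonneg hα (euclNorm_nonneg v)).trans (euclNorm_nonneg _)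
  have sq_le_weight_sq (i : Fin k) : α ^ 2 ≤ w i ^ 2 :=
    sq_le_sq.mpr ((abs_of_nonneg hα).trans_le (hw i))
  calc α * euclNorm v = √(∑ i, α ^ 2 * v i ^ 2) := by
        rw [← Finset.mul_sum, Real.sqrt_mul (sq_nonneg α), Real.sqrt_sq hα, euclNorm]
    _ ≤ √(∑ i, w i ^ 2 * v i ^ 2) :=
        Real.sqrt_le_sqrt <| Finset.sum_le_sum fun i _ =>
          mul_le_mul_of_nonneg_right (sq_le_weight_sq i) (sq_nonneg _)
    _ = euclNorm (w * v) := by simp only [euclNorm, Pi.mul_apply, mul_pow]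

lemma l0norm_mul_le (w v : Fin k → ℝ) : l0norm (w * v) ≤ l0norm v :=
  Finset.card_le_card <| Finset.monotone_filter_right _ fun _ _ => right_ne_zero_of_mul

lemma l0norm_single_le_one (i : Fin k) (a : ℝ) : l0norm (Pi.single i a) ≤ 1 := by
  refine (Finset.card_le_card (t := {i}) fun j hj => ?_).trans_eq (Finset.card_singleton i)
  contrapose! hj
  simp [Pi.single_eq_of_ne (Finset.notMem_singleton.mp hj)]

end Norms

section SparseEigenvalues

variable {n p m : ℕ} {X : Matrix (Fin n) (Fin p) ℝ} {v : Fin p → ℝ} {r : ℝ}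

lemma euclNorm_mulVec_le_phiMax_mul (X : Matrix (Fin n) (Fin p) ℝ) (hv : l0norm v ≤ m) :
    euclNorm (X *ᵥ v) ≤ phiMax X m * euclNorm v := by
  rcases eq_or_ne v 0 with rfl | hv0
  · simp [euclNorm_zero]
  rw [← div_le_iff₀ (euclNorm_pos hv0)]
  refine le_csSup ⟨‖X‖, ?_⟩ ⟨v, hv0, hv, rfl⟩
  rintro _ ⟨u, hu0, -, rfl⟩
  exact (div_le_iff₀ (euclNorm_pos hu0)).mpr (euclNorm_mulVec_le X u)

lemma phiMin_mul_le_euclNorm_mulVec (X : Matrix (Fin n) (Fin p) ℝ) (hv : l0norm v ≤ m) :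
    phiMin X m * euclNorm v ≤ euclNorm (X *ᵥ v) := by
  rcases eq_or_ne v 0 with rfl | hv0
  · simp [euclNorm_zero]
  rw [← le_div_iff₀ (euclNorm_pos hv0)]
  refine csInf_le ⟨0, ?_⟩ ⟨v, hv0, hv, rfl⟩
  rintro _ ⟨u, -, -, rfl⟩
  exact div_nonneg (euclNorm_nonneg _) (euclNorm_nonneg _)

lemma phiMax_nonneg (X : Matrix (Fin n) (Fin p) ℝ) (m : ℕ) : 0 ≤ phiMax X m := by
  refine Real.sSup_nonneg ?_
  rintro _ ⟨v, -, -, rfl⟩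
  exact div_nonneg (euclNorm_nonneg _) (euclNorm_nonneg _)

lemma phiMin_nonneg (X : Matrix (Fin n) (Fin p) ℝ) (m : ℕ) : 0 ≤ phiMin X m := by
  refine Real.sInf_nonneg ?_
  rintro _ ⟨v, -, -, rfl⟩
  exact div_nonneg (euclNorm_nonneg _) (euclNorm_nonneg _)

lemma phiMax_le (hr : 0 ≤ r) (h : ∀ v, l0norm v ≤ m → euclNorm (X *ᵥ v) ≤ r * euclNorm v) :
    phiMax X m ≤ r := by
  refine Real.sSup_le ?_ hr
  rintro _ ⟨v, hv0, hv, rfl⟩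
  exact (div_le_iff₀ (euclNorm_pos hv0)).mpr (h v hv)

lemma le_phiMin (hm : 0 < m) (hp : 0 < p)
    (h : ∀ v, l0norm v ≤ m → r * euclNorm v ≤ euclNorm (X *ᵥ v)) : r ≤ phiMin X m := by
  refine le_csInf ?_ ?_
  · exact ⟨_, Pi.single ⟨0, hp⟩ 1, by simp, (l0norm_single_le_one _ _).trans hm, rfl⟩
  · rintro _ ⟨v, hv0, hv, rfl⟩
    exact (le_div_iff₀ (euclNorm_pos hv0)).mpr (h v hv)

lemma phiMax_mul_diagonal_le (X : Matrix (Fin n) (Fin p) ℝ) (w : Fin p → ℝ) (m : ℕ) :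
    phiMax (X * diagonal w) m ≤ ‖w‖ * phiMax X m := by
  refine phiMax_le (mul_nonneg (norm_nonneg w) (phiMax_nonneg X m)) fun v hv => ?_
  calc euclNorm ((X * diagonal w) *ᵥ v) = euclNorm (X *ᵥ (w * v)) := by rw [mul_diagonal_mulVec]
    _ ≤ phiMax X m * euclNorm (w * v) :=
        euclNorm_mulVec_le_phiMax_mul X ((l0norm_mul_le w v).trans hv)
    _ ≤ phiMax X m * (‖w‖ * euclNorm v) :=
        mul_le_mul_of_nonneg_left (euclNorm_mul_le w v) (phiMax_nonneg X m)
    _ = ‖w‖ * phiMax X m * euclNorm v := by ring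

lemma mul_phiMin_le_phiMin_mul_diagonal (X : Matrix (Fin n) (Fin p) ℝ) {α : ℝ} {w : Fin p → ℝ}
    (hw : ∀ k, α ≤ |w k|) (hm : 0 < m) (hp : 0 < p) :
    α * phiMin X m ≤ phiMin (X * diagonal w) m := by
  refine le_phiMin hm hp fun v hv => ?_
  calc α * phiMin X m * euclNorm v = phiMin X m * (α * euclNorm v) := by ring
    _ ≤ phiMin X m * euclNorm (w * v) :=
        mul_le_mul_of_nonneg_left (mul_euclNorm_le_euclNorm_mul hw v) (phiMin_nonneg X m)
    _ ≤ euclNorm (X *ᵥ (w * v)) :=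
        phiMin_mul_le_euclNorm_mulVec X ((l0norm_mul_le w v).trans hv)
    _ = euclNorm ((X * diagonal w) *ᵥ v) := by rw [mul_diagonal_mulVec]

end SparseEigenvalues

theorem sparse_eigenvalues_of_rescaled_general
    {n p m : ℕ} (X : Matrix (Fin n) (Fin p) ℝ) {α β : ℝ} {w : Fin p → ℝ}
    (hw : ∀ k, α ≤ |w k| ∧ |w k| ≤ β) (hm : 0 < m) (hp : 0 < p) :
    phiMax (X * diagonal w) m ≤ β * phiMax X m ∧
      α * phiMin X m ≤ phiMin (X * diagonal w) m := by
  have : Nonempty (Fin p) := ⟨⟨0, hp⟩⟩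
  have norm_w_le : ‖w‖ ≤ β := (pi_norm_le_iff_of_nonempty w).mpr fun k => (hw k).2
  exact ⟨(phiMax_mul_diagonal_le X w m).trans
      (mul_le_mul_of_nonneg_right norm_w_le (phiMax_nonneg X m)),
    mul_phiMin_le_phiMin_mul_diagonal X (fun k => (hw k).1) hm hp⟩

/-- Rescaling the columns of `X` by weights in `[α, 1]` decreases the maximal sparse
eigenvalue and decreases the minimal sparse eigenvalue by at most a factor `α`. -/
theorem sparse_eigenvalues_of_rescaled
    {n p : ℕ} (X : Matrix (Fin n) (Fin p) ℝ)
    (α : ℝ) (hα0 : 0 < α) (hα1 : α ≤ 1)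
    (w : Fin p → ℝ) (hw : ∀ k, α ≤ w k ∧ w k ≤ 1)
    (Xw : Matrix (Fin n) (Fin p) ℝ) (hXw : ∀ i k, Xw i k = w k * X i k)
    (m : ℕ) (hm1 : 1 ≤ m) (hmp : m ≤ p) :
    phiMax Xw m ≤ phiMax X m ∧ α * phiMin X m ≤ phiMin Xw m := by
  obtain rfl : Xw = X * diagonal w := by ext i k; rw [hXw, mul_diagonal, mul_comm]
  have hw_abs (k : Fin p) : α ≤ |w k| ∧ |w k| ≤ 1 := by
    simpa only [abs_of_pos (hα0.trans_le (hw k).1)] using hw k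
  simpa only [one_mul] using sparse_eigenvalues_of_rescaled_general X hw_abs hm1 (hm1.trans hmp)
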